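/- arXiv:0908.2928 — 3 statements merged into one kernel-verified Lean document; each statement's English description precedes it below -/
import Mathlib

section
/- Let Λ be an adic ring and G a finite group. Then the group ring Λ[G] is an adic ring. -/
/-!
Write `J = Jac(Λ)`, `R = Λ[G]`, `I = Jac(R)`, and let `Jᵏ[G]` be the elements of `R` all of whose
coefficients lie in `Jᵏ`. The filtrations `(Iᵏ)` and `(Jᵏ[G])` of `R` are cofinal:

* `J[G] ⊆ I`. Since `J[G]` is a left ideal, it suffices that `1 - x` is a unit for `x ∈ J[G]`. As
  `xᵏ ∈ Jᵏ[G]`, the geometric series of `x` converges coefficientwise, and its sum is a two-sided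
  inverse of `1 - x`. Consequently `Jᵏ[G] ⊆ Iᵏ`.
* `I^N ⊆ J[G]` for some `N`. The ring `(Λ/J)[G]` is finite, hence Artinian, hence has nilpotent
  Jacobson radical; a surjection of rings maps the radical into the radical, and `J[G]` is the
  kernel of `R → (Λ/J)[G]`. Consequently `I^(Nk) ⊆ Jᵏ[G]`.

By the first inclusion `Iᵏ` has finite index because `Jᵏ[G]` has. Separatedness follows from the
second. A sequence that is Cauchy for `(Iᵏ)` has, by the second inclusion, a subsequence that is
Cauchy for `(Jᵏ[G])`; its coefficientwise limit is a limit for `(Iᵏ)` by the first inclusion.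
-/

open Pointwise
open Pointwise

/-- The Jacobson radical of a (possibly noncommutative) ring, as a set:
`{x | 1 - r*x is invertible for all r}`. -/
def jacSet (Λ : Type) [Ring Λ] : Set Λ := {x | ∀ r : Λ, IsUnit (1 - r * x)}

/-- The additive subgroup generated by all products of `n` elements of `S`;
for a two-sided ideal `S` this is the `n`-th power ideal. -/
def powAdd (Λ : Type) [Ring Λ] (S : Set Λ) (n : ℕ) : AddSubgroup Λ :=
  AddSubgroup.closure (S ^ n)

/-- `Λ` is `S`-adically complete with finite quotients: every `Sⁿ` has finite index and
the natural map `Λ → lim_n Λ/Sⁿ` is bijective. -/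
def IsAdicWith (Λ : Type) [Ring Λ] (S : Set Λ) : Prop :=
  (∀ n : ℕ, Finite (Λ ⧸ powAdd Λ S (n + 1))) ∧
  Function.Injective
    (fun (x : Λ) (n : ℕ) => (QuotientAddGroup.mk x : Λ ⧸ powAdd Λ S (n + 1))) ∧
  ∀ y : ∀ n : ℕ, Λ ⧸ powAdd Λ S (n + 1),
    (∀ (n : ℕ) (a : Λ), (QuotientAddGroup.mk a : Λ ⧸ powAdd Λ S (n + 2)) = y (n + 1) →
      (QuotientAddGroup.mk a : Λ ⧸ powAdd Λ S (n + 1)) = y n) →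
    ∃ x : Λ, ∀ n : ℕ, (QuotientAddGroup.mk x : Λ ⧸ powAdd Λ S (n + 1)) = y n

/-- A ring is adic if for every `n ≥ 1` the `n`-th power of its Jacobson radical has finite
index, and the natural map `Λ → lim_n Λ/Jac(Λ)ⁿ` is bijective. -/
def IsAdicRing (Λ : Type) [Ring Λ] : Prop := IsAdicWith Λ (jacSet Λ)

/-- The Jacobson radical as a two-sided ideal. -/
def jacIdeal (Λ : Type) [Ring Λ] : TwoSidedIdeal Λ :=
  TwoSidedIdeal.mk' (jacSet Λ)
    (fun r => by simp)
    (fun {x y} hx hy r => by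
      obtain ⟨u, hu⟩ := hx r
      have key : (1 : Λ) - r * (x + y) = ↑u * (1 - (↑u⁻¹ * r) * y) := by
        have h1 : (↑u : Λ) * (1 - (↑u⁻¹ * r) * y) = ↑u - r * y := by
          rw [mul_sub, mul_one, ← mul_assoc, ← mul_assoc, Units.mul_inv, one_mul]
        rw [h1, hu]
        noncomm_ring
      rw [key]
      exact u.isUnit.mul (hy (↑u⁻¹ * r)))
    (fun {x} hx r => by
      have h1 : (1 : Λ) - r * -x = 1 - -r * x := by noncomm_ring
      rw [h1]; exact hx (-r))
    (fun {x y} hy r => by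
      have h1 : (1 : Λ) - r * (x * y) = 1 - r * x * y := by noncomm_ring
      rw [h1]; exact hy (r * x))
    (fun {x y} hx r => by
      -- `1 - a*b` is a unit iff `1 - b*a` is a unit, applied to `a = r*x`, `b = y`.
      obtain ⟨u, hu⟩ := hx (y * r)
      refine isUnit_iff_exists.mpr ⟨1 + r * x * ↑u⁻¹ * y, ?_, ?_⟩
      · calc (1 - r * (x * y)) * (1 + r * x * ↑u⁻¹ * y)
            = 1 - r * (x * y) + r * x * ((1 - y * r * x) * ↑u⁻¹) * y := by noncomm_ring
          _ = 1 - r * (x * y) + r * x * (↑u * ↑u⁻¹) * y := by rw [← hu]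
          _ = 1 := by rw [Units.mul_inv]; noncomm_ring
      · calc (1 + r * x * ↑u⁻¹ * y) * (1 - r * (x * y))
            = 1 - r * (x * y) + r * x * (↑u⁻¹ * (1 - y * r * x)) * y := by noncomm_ring
          _ = 1 - r * (x * y) + r * x * (↑u⁻¹ * ↑u) * y := by rw [← hu]
          _ = 1 := by rw [Units.inv_mul]; noncomm_ring)

/-! ### Powers of an additive generating set and adic completeness -/

section Powers

variable {Λ : Type} [Ring Λ] {S : Set Λ}

lemma mul_mem_powAdd {m n : ℕ} {x y : Λ} (hx : x ∈ powAdd Λ S m) (hy : y ∈ powAdd Λ S n) :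
    x * y ∈ powAdd Λ S (m + n) := by
  unfold powAdd at hx hy ⊢
  induction hx using AddSubgroup.closure_induction with
  | mem x hx =>
    induction hy using AddSubgroup.closure_induction with
    | mem y hy => exact AddSubgroup.subset_closure (by rw [pow_add]; exact Set.mul_mem_mul hx hy)
    | zero => simp
    | add y z _ _ h1 h2 => rw [mul_add]; exact add_mem h1 h2
    | neg y _ h => rw [mul_neg]; exact neg_mem h
  | zero => simp
  | add x z _ _ h1 h2 => rw [add_mul]; exact add_mem h1 h2
  | neg x _ h => rw [neg_mul]; exact neg_mem h

lemma powAdd_succ_le (hS : S * S ⊆ S) (n : ℕ) : powAdd Λ S (n + 2) ≤ powAdd Λ S (n + 1) := by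
  refine AddSubgroup.closure_mono ?_
  rw [pow_succ, pow_succ, mul_assoc]
  exact Set.mul_subset_mul_left hS

lemma powAdd_antitone (hS : S * S ⊆ S) : Antitone fun n => powAdd Λ S (n + 1) :=
  antitone_nat_of_succ_le (powAdd_succ_le hS)

/-- Adic completeness in terms of sequences of elements: a compatible system in the quotients is
represented by a sequence `x` with `x (n + 1) ≡ x n` modulo `Sⁿ⁺¹`. -/
lemma isAdicWith_iff (hS : S * S ⊆ S) : IsAdicWith Λ S ↔
    (∀ n, (powAdd Λ S (n + 1)).FiniteIndex) ∧
    (∀ x : Λ, (∀ n, x ∈ powAdd Λ S (n + 1)) → x = 0) ∧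
    ∀ x : ℕ → Λ, (∀ n, x (n + 1) - x n ∈ powAdd Λ S (n + 1)) →
      ∃ z, ∀ n, z - x n ∈ powAdd Λ S (n + 1) := by
  have key : ∀ (n : ℕ) (a b : Λ), (QuotientAddGroup.mk a : Λ ⧸ powAdd Λ S (n + 1)) =
      QuotientAddGroup.mk b ↔ a - b ∈ powAdd Λ S (n + 1) := fun n a b => by
    rw [eq_comm, QuotientAddGroup.eq, neg_add_eq_sub]
  unfold IsAdicWith
  refine and_congr ?_ (and_congr ?_ ?_)
  · simp_rw [AddSubgroup.finiteIndex_iff_finite_quotient]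
  · constructor
    · intro h x hx
      refine h (funext fun n => ?_)
      simpa [key] using hx n
    · intro h x y hxy
      refine sub_eq_zero.mp (h _ fun n => ?_)
      exact (key n x y).mp (congrFun hxy n)
  · constructor
    · intro h x hx
      obtain ⟨z, hz⟩ := h (fun n => QuotientAddGroup.mk (x n)) fun n a ha => by
        rw [key] at ha ⊢
        have := add_mem (powAdd_succ_le hS n ha) (hx n)
        simpa using this
      exact ⟨z, fun n => (key n _ _).mp (hz n)⟩
    · intro h y hy
      choose x hx using fun n => QuotientAddGroup.mk_surjective (y n)
      obtain ⟨z, hz⟩ := h x fun n => by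
        rw [← key, hx n]
        exact hy n _ (hx (n + 1))
      exact ⟨z, fun n => by rw [← hx n, key]; exact hz n⟩

end Powers

/-! ### The Jacobson radical -/

section Radical

variable {Λ : Type} [Ring Λ]

lemma mem_jacIdeal {x : Λ} : x ∈ jacIdeal Λ ↔ x ∈ jacSet Λ := by
  unfold jacIdeal
  exact TwoSidedIdeal.mem_mk' ..

lemma jacSet_mul_subset : jacSet Λ * jacSet Λ ⊆ jacSet Λ := by
  rintro _ ⟨x, hx, y, hy, rfl⟩
  exact mem_jacIdeal.mp ((jacIdeal Λ).mul_mem_left x y (mem_jacIdeal.mpr hy))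

lemma mem_powAdd_one {x : Λ} : x ∈ powAdd Λ (jacSet Λ) 1 ↔ x ∈ jacIdeal Λ := by
  unfold powAdd
  rw [pow_one]
  refine ⟨fun h => ?_, fun h => AddSubgroup.subset_closure (mem_jacIdeal.mp h)⟩
  induction h using AddSubgroup.closure_induction with
  | mem x hx => exact mem_jacIdeal.mpr hx
  | zero => exact (jacIdeal Λ).zero_mem
  | add x y _ _ h1 h2 => exact (jacIdeal Λ).add_mem h1 h2
  | neg x _ h => exact (jacIdeal Λ).neg_mem h

/-- A surjective ring homomorphism maps the Jacobson radical into the Jacobson radical. -/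
lemma map_mem_jacobson {Q : Type} [Ring Q] (f : Λ →+* Q) (hf : Function.Surjective f) {x : Λ}
    (hx : x ∈ jacSet Λ) : f x ∈ Ring.jacobson Q := by
  rw [← Ideal.jacobson_bot, Ideal.mem_jacobson_iff]
  intro y
  obtain ⟨r, rfl⟩ := hf y
  obtain ⟨u, hu⟩ := hx (-r)
  refine ⟨f ↑u⁻¹, ?_⟩
  have h : (↑u⁻¹ : Λ) * r * x + ↑u⁻¹ = 1 := by
    rw [← u.inv_mul, hu]
    noncomm_ring
  rw [Ideal.mem_bot, ← map_mul, ← map_mul, ← map_add, h, map_one, sub_self]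

end Radical

/-! ### The coefficientwise filtration of the group ring -/

section GroupRing

variable {Λ : Type} [Ring Λ] {G : Type} [Group G]

variable (Λ G) in
/-- The additive subgroup `Jⁿ[G]` of `Λ[G]`, for `J` the Jacobson radical of `Λ`: the elements all
of whose coefficients lie in `Jⁿ`. -/
def coeffPow (n : ℕ) : AddSubgroup (MonoidAlgebra Λ G) where
  carrier := {x | ∀ g, x.coeff g ∈ powAdd Λ (jacSet Λ) n}
  zero_mem' _ := zero_mem _
  add_mem' hx hy g := add_mem (hx g) (hy g)
  neg_mem' hx g := neg_mem (hx g)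

lemma mem_coeffPow {n : ℕ} {x : MonoidAlgebra Λ G} :
    x ∈ coeffPow Λ G n ↔ ∀ g, x.coeff g ∈ powAdd Λ (jacSet Λ) n := Iff.rfl

lemma mul_mem_coeffPow {m n : ℕ} {x y : MonoidAlgebra Λ G} (hx : x ∈ coeffPow Λ G m)
    (hy : y ∈ coeffPow Λ G n) : x * y ∈ coeffPow Λ G (m + n) := by
  classical
  intro g
  rw [MonoidAlgebra.coeff_mul]
  refine sum_mem fun a _ => sum_mem fun b _ => ?_
  dsimp only
  split_ifs
  · exact mul_mem_powAdd (hx a) (hy b)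
  · exact zero_mem _

/-- `J[G]` is stable under left multiplication by `Λ[G]`. -/
lemma mul_mem_coeffPow_one (r : MonoidAlgebra Λ G) {x : MonoidAlgebra Λ G}
    (hx : x ∈ coeffPow Λ G 1) : r * x ∈ coeffPow Λ G 1 := by
  classical
  intro g
  rw [MonoidAlgebra.coeff_mul]
  refine sum_mem fun a _ => sum_mem fun b _ => ?_
  dsimp only
  split_ifs
  · exact mem_powAdd_one.mpr ((jacIdeal Λ).mul_mem_left _ _ (mem_powAdd_one.mp (hx b)))
  · exact zero_mem _

lemma coeffPow_antitone : Antitone fun n => coeffPow Λ G (n + 1) :=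
  fun _ _ h _ hx g => powAdd_antitone jacSet_mul_subset h (hx g)

lemma pow_mem_coeffPow {x : MonoidAlgebra Λ G} (hx : x ∈ coeffPow Λ G 1) (n : ℕ) :
    x ^ (n + 1) ∈ coeffPow Λ G (n + 1) := by
  induction n with
  | zero => simpa using hx
  | succ n ih => rw [pow_succ]; exact mul_mem_coeffPow ih hx

/-- The subgroups `Jⁿ[G]` separate the elements of `Λ[G]`. -/
lemma eq_zero_of_mem_coeffPow (hΛ : IsAdicRing Λ) {x : MonoidAlgebra Λ G}
    (hx : ∀ n, x ∈ coeffPow Λ G (n + 1)) : x = 0 := by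
  ext g
  exact ((isAdicWith_iff jacSet_mul_subset).mp hΛ).2.1 _ fun n => hx n g

/-- `Λ[G]` is complete for the filtration `Jⁿ[G]`: limits are taken coefficient by coefficient. -/
lemma exists_lim_coeffPow [Finite G] (hΛ : IsAdicRing Λ) (x : ℕ → MonoidAlgebra Λ G)
    (hx : ∀ n, x (n + 1) - x n ∈ coeffPow Λ G (n + 1)) :
    ∃ z, ∀ n, z - x n ∈ coeffPow Λ G (n + 1) := by
  choose z hz using fun g => ((isAdicWith_iff jacSet_mul_subset).mp hΛ).2.2
    (fun n => (x n).coeff g) fun n => hx n g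
  exact ⟨.ofCoeff (Finsupp.equivFunOnFinite.symm z), fun n g => hz g n⟩

lemma finiteIndex_coeffPow [Finite G] (hΛ : IsAdicRing Λ) (n : ℕ) :
    (coeffPow Λ G (n + 1)).FiniteIndex := by
  have := hΛ.1 n
  rw [AddSubgroup.finiteIndex_iff_finite_quotient]
  -- A class modulo `Jⁿ⁺¹[G]` is determined by the classes of its coefficients modulo `Jⁿ⁺¹`.
  let f : MonoidAlgebra Λ G → G → Λ ⧸ powAdd Λ (jacSet Λ) (n + 1) :=
    fun x g => QuotientAddGroup.mk (x.coeff g)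
  refine Finite.of_injective (fun q : MonoidAlgebra Λ G ⧸ coeffPow Λ G (n + 1) => f q.out) ?_
  intro p q h
  rw [← QuotientAddGroup.out_eq' p, ← QuotientAddGroup.out_eq' q, QuotientAddGroup.eq]
  exact fun g => QuotientAddGroup.eq.mp (congrFun h g)

/-! ### Comparison with the powers of the Jacobson radical -/

/-- `J[G]` lies in the Jacobson radical of `Λ[G]`, by summing geometric series. -/
lemma coeffPow_one_subset [Finite G] (hΛ : IsAdicRing Λ) :
    (coeffPow Λ G 1 : Set (MonoidAlgebra Λ G)) ⊆ jacSet (MonoidAlgebra Λ G) := by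
  intro y hy r
  have hx : r * y ∈ coeffPow Λ G 1 := mul_mem_coeffPow_one r hy
  generalize r * y = x at hx
  obtain ⟨z, hz⟩ := exists_lim_coeffPow hΛ (fun n => ∑ i ∈ Finset.range (n + 1), x ^ i) fun n => by
    rw [Finset.sum_range_succ _ (n + 1), add_sub_cancel_left]
    exact pow_mem_coeffPow hx n
  refine isUnit_iff_exists.mpr ⟨z, ?_, ?_⟩ <;>
    refine sub_eq_zero.mp (eq_zero_of_mem_coeffPow hΛ fun n => ?_)
  -- Modulo `Jⁿ⁺¹[G]`, replace `z` by the partial sum, for which the product telescopes.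
  · have h1 := coeffPow_antitone (Nat.le_succ n)
      (Nat.add_comm 1 (n + 1) ▸ mul_mem_coeffPow hx (hz n))
    have h2 := mul_neg_geom_sum x (n + 1)
    have : (1 - x) * z - 1 = (z - ∑ i ∈ Finset.range (n + 1), x ^ i)
        - x * (z - ∑ i ∈ Finset.range (n + 1), x ^ i) - x ^ (n + 1) := by
      rw [← sub_eq_zero, ← sub_eq_zero.mpr h2]
      noncomm_ring
    rw [this]
    exact sub_mem (sub_mem (hz n) h1) (pow_mem_coeffPow hx n)
  · have h1 := coeffPow_antitone (Nat.le_succ n) (mul_mem_coeffPow (hz n) hx)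
    have h2 := geom_sum_mul_neg x (n + 1)
    have : z * (1 - x) - 1 = (z - ∑ i ∈ Finset.range (n + 1), x ^ i)
        - (z - ∑ i ∈ Finset.range (n + 1), x ^ i) * x - x ^ (n + 1) := by
      rw [← sub_eq_zero, ← sub_eq_zero.mpr h2]
      noncomm_ring
    rw [this]
    exact sub_mem (sub_mem (hz n) h1) (pow_mem_coeffPow hx n)

lemma single_mem_jacSet [Finite G] (hΛ : IsAdicRing Λ) {a : Λ} (ha : a ∈ jacSet Λ) (g : G) :
    MonoidAlgebra.single g a ∈ jacSet (MonoidAlgebra Λ G) := by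
  classical
  refine coeffPow_one_subset hΛ fun h => ?_
  rw [MonoidAlgebra.coeff_single, Finsupp.single_apply]
  split_ifs
  · exact mem_powAdd_one.mpr (mem_jacIdeal.mpr ha)
  · exact zero_mem _

lemma single_mem_jacSet_pow [Finite G] (hΛ : IsAdicRing Λ) (n : ℕ) {a : Λ}
    (ha : a ∈ jacSet Λ ^ (n + 1)) (g : G) :
    MonoidAlgebra.single g a ∈ jacSet (MonoidAlgebra Λ G) ^ (n + 1) := by
  induction n generalizing a g with
  | zero => simpa using single_mem_jacSet hΛ (by simpa using ha) g
  | succ n ih =>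
    rw [pow_succ] at ha ⊢
    obtain ⟨b, hb, c, hc, rfl⟩ := ha
    refine ⟨_, ih hb 1, _, single_mem_jacSet hΛ hc g, ?_⟩
    simp [MonoidAlgebra.single_mul_single]

/-- `Jⁿ[G] ⊆ Iⁿ` for `I` the Jacobson radical of `Λ[G]` and `n ≥ 1`. -/
lemma coeffPow_le [Finite G] (hΛ : IsAdicRing Λ) (n : ℕ) :
    coeffPow Λ G (n + 1) ≤ powAdd (MonoidAlgebra Λ G) (jacSet (MonoidAlgebra Λ G)) (n + 1) := by
  have key : ∀ (g : G) (a : Λ), a ∈ powAdd Λ (jacSet Λ) (n + 1) → MonoidAlgebra.single g a ∈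
      powAdd (MonoidAlgebra Λ G) (jacSet (MonoidAlgebra Λ G)) (n + 1) := by
    intro g a ha
    induction ha using AddSubgroup.closure_induction with
    | mem a ha => exact AddSubgroup.subset_closure (single_mem_jacSet_pow hΛ n ha g)
    | zero => rw [MonoidAlgebra.single_zero]; exact zero_mem _
    | add a b _ _ h1 h2 => rw [MonoidAlgebra.single_add]; exact add_mem h1 h2
    | neg a _ h => rw [MonoidAlgebra.single_neg]; exact neg_mem h
  intro x hx
  rw [← MonoidAlgebra.sum_coeff_single x]
  exact sum_mem fun g _ => key g _ (hx g)

/-- Some power of the Jacobson radical of `Λ[G]` lies in `J[G]`, because the finite ring `(Λ/J)[G]`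
has nilpotent Jacobson radical. -/
lemma exists_jacSet_pow_subset [Finite G] (hΛ : IsAdicRing Λ) :
    ∃ N : ℕ, jacSet (MonoidAlgebra Λ G) ^ (N + 1) ⊆ (coeffPow Λ G 1 : Set (MonoidAlgebra Λ G)) := by
  let Q := (jacIdeal Λ).ringCon.Quotient
  let π : Λ →+* Q := (jacIdeal Λ).ringCon.mk'
  have hπ : Function.Surjective π := (jacIdeal Λ).ringCon.mk'_surjective
  have hker : ∀ a, π a = 0 ↔ a ∈ jacIdeal Λ := fun a => by
    rw [← TwoSidedIdeal.mem_ker, TwoSidedIdeal.ker_ringCon_mk']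
  have : Finite Q := by
    have := hΛ.1 0
    refine Finite.of_surjective (QuotientAddGroup.lift (powAdd Λ (jacSet Λ) (0 + 1))
      (π : Λ →+ Q) fun a ha => (hker a).mpr (mem_powAdd_one.mp ha)) fun q => ?_
    obtain ⟨a, rfl⟩ := hπ q
    exact ⟨QuotientAddGroup.mk a, rfl⟩
  have : Finite (MonoidAlgebra Q G) :=
    Finite.of_injective (fun x => (x.coeff : G → Q)) fun x y h => by ext g; exact congrFun h g
  let f : MonoidAlgebra Λ G →+* MonoidAlgebra Q G := MonoidAlgebra.mapRingHom G π
  have hf : Function.Surjective f := fun y => by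
    choose a ha using fun g => hπ (y.coeff g)
    refine ⟨.ofCoeff (Finsupp.equivFunOnFinite.symm a), ?_⟩
    ext g
    simpa [f] using ha g
  obtain ⟨N, hN⟩ := IsSemiprimaryRing.isNilpotent (R := MonoidAlgebra Q G)
  have hpow : ∀ (n : ℕ) (x : MonoidAlgebra Λ G), x ∈ jacSet (MonoidAlgebra Λ G) ^ n →
      f x ∈ Ring.jacobson (MonoidAlgebra Q G) ^ n := by
    intro n
    induction n with
    | zero => intro x _; rw [Submodule.pow_zero, Ideal.one_eq_top]; trivial
    | succ n ih =>
      intro x hx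
      rw [pow_succ] at hx
      obtain ⟨b, hb, c, hc, rfl⟩ := hx
      rw [Submodule.pow_succ, map_mul]
      exact Ideal.mul_mem_mul (ih b hb) (map_mem_jacobson f hf hc)
  refine ⟨N, fun x hx g => ?_⟩
  have h0 : f x = 0 := by
    have := hpow _ x hx
    rw [Submodule.pow_succ, hN] at this
    simpa using this
  rw [mem_powAdd_one, ← hker]
  simpa [f] using congrArg (fun y => y.coeff g) h0

end GroupRing

/-- If `Λ` is an adic ring and `G` is a finite group, then the group ring
`Λ[G]` is an adic ring. -/
theorem isAdicRing_monoidAlgebra (Λ : Type) [Ring Λ] (G : Type) [Group G] [Finite G]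
    (hΛ : IsAdicRing Λ) : IsAdicRing (MonoidAlgebra Λ G) := by
  obtain ⟨N, hN⟩ := exists_jacSet_pow_subset (G := G) hΛ
  have hle : ∀ n, powAdd (MonoidAlgebra Λ G) (jacSet (MonoidAlgebra Λ G))
      ((N + 1) * (n + 1) + 1) ≤ coeffPow Λ G (n + 1) := by
    intro n
    have hd : (N + 1) * (n + 1) = ((N + 1) * (n + 1) - 1) + 1 :=
      (Nat.sub_add_cancel (Nat.mul_pos N.succ_pos n.succ_pos)).symm
    have h1 : powAdd (MonoidAlgebra Λ G) (jacSet (MonoidAlgebra Λ G)) ((N + 1) * (n + 1) + 1) ≤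
        powAdd (MonoidAlgebra Λ G) (jacSet (MonoidAlgebra Λ G)) ((N + 1) * (n + 1)) := by
      rw [hd]
      exact powAdd_succ_le jacSet_mul_subset _
    refine h1.trans ((AddSubgroup.closure_le _).mpr ?_)
    rw [pow_mul]
    refine (Set.pow_subset_pow_left hN).trans ?_
    clear hd h1
    induction n with
    | zero => simp
    | succ n ih =>
      rw [pow_succ]
      rintro _ ⟨x, hx, y, hy, rfl⟩
      exact mul_mem_coeffPow (ih hx) hy
  refine (isAdicWith_iff jacSet_mul_subset).mpr ⟨fun n => ?_, fun x hx => ?_, fun x hx => ?_⟩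
  · have := finiteIndex_coeffPow (G := G) hΛ n
    exact AddSubgroup.finiteIndex_of_le (coeffPow_le hΛ n)
  · exact eq_zero_of_mem_coeffPow hΛ fun n => hle n (hx _)
  · have hcauchy : ∀ m n, m ≤ n → x n - x m ∈
        powAdd (MonoidAlgebra Λ G) (jacSet (MonoidAlgebra Λ G)) (m + 1) := by
      intro m n hmn
      induction n, hmn using Nat.le_induction with
      | base => simp
      | succ k hk ih =>
        rw [← sub_add_sub_cancel _ (x k) _]
        exact add_mem (powAdd_antitone jacSet_mul_subset hk (hx k)) ih
    -- The subsequence of index `(N + 1) * (n + 1)` is Cauchy for the filtration `Jⁿ[G]`.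
    obtain ⟨z, hz⟩ := exists_lim_coeffPow hΛ (fun n => x ((N + 1) * (n + 1))) fun n =>
      hle n (hcauchy _ _ (Nat.mul_le_mul_left _ (Nat.le_succ _)))
    refine ⟨z, fun n => ?_⟩
    rw [← sub_add_sub_cancel _ (x ((N + 1) * (n + 1))) _]
    exact add_mem (coeffPow_le hΛ n (hz n)) (hcauchy _ _ (by nlinarith))
end

section
/- Let ℓ be a prime. There is a ring isomorphism ℤ_ℓ[[T]] ≅ lim_n ℤ_ℓ[ℤ/ℓⁿℤ], where the inverse limit is taken over n ≥ 1 along the ring homomorphisms ℤ_ℓ[ℤ/ℓ^{n+1}ℤ] → ℤ_ℓ[ℤ/ℓⁿℤ] induced by the canonical surjections ℤ/ℓ^{n+1}ℤ → ℤ/ℓⁿℤ, which sends T to the compatible system (γ_n − 1)_n, where γ_n is the group element of ℤ_ℓ[ℤ/ℓⁿℤ] corresponding to the residue class of 1 in ℤ/ℓⁿℤ. -/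
/-!
Put `γ` for the generator of `ℤ/N`, `N = ℓⁿ`. Evaluation of polynomials at `γ - 1` identifies
`ℤ_ℓ[X] / ((1 + X)^N - 1)` with the group ring `ℤ_ℓ[ℤ/N]`. Since `ω = (1 + X)^N - 1` is a
distinguished polynomial, Weierstrass division gives `ℤ_ℓ[X] / (ω) ≅ ℤ_ℓ⟦X⟧ / (ω)`, so that
evaluation extends to a surjection `φ : ℤ_ℓ⟦X⟧ → ℤ_ℓ[ℤ/N]` with kernel `(ω)` (`exists_evalHom`).

For varying `n` these surjections are compatible, and hence define a map to the inverse limit.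
* It is injective because `ω_n` lies in the `n`-th power of the maximal ideal of the Noetherian
  local ring `ℤ_ℓ⟦X⟧` (`omegaPoly_mem_pow`), so Krull's intersection theorem gives `⋂ (ω_n) = 0`.
* It is surjective because `ℤ_ℓ⟦X⟧` is compact for the topology of coefficientwise convergence:
  the fibres over the components of a compatible system are a decreasing sequence of nonempty
  closed sets, each a coset of some `(ω_n)`, and so have a common point.
-/

noncomputable section

/-- The transition homomorphism `ℤ_ℓ[ℤ/ℓ^(n+2)ℤ] → ℤ_ℓ[ℤ/ℓ^(n+1)ℤ]` induced by the
canonical surjection `ℤ/ℓ^(n+2)ℤ → ℤ/ℓ^(n+1)ℤ`. -/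
def zlTransition (ℓ : ℕ) [Fact ℓ.Prime] (n : ℕ) :
    MonoidAlgebra ℤ_[ℓ] (Multiplicative (ZMod (ℓ ^ (n + 2)))) →+*
      MonoidAlgebra ℤ_[ℓ] (Multiplicative (ZMod (ℓ ^ (n + 1)))) :=
  MonoidAlgebra.mapDomainRingHom ℤ_[ℓ]
    (AddMonoidHom.toMultiplicative
      ((ZMod.castHom (pow_dvd_pow ℓ (Nat.le_succ (n + 1))) (ZMod (ℓ ^ (n + 1)))).toAddMonoidHom))

/-- The inverse limit `lim_n ℤ_ℓ[ℤ/ℓⁿℤ]`, realized as the subring of compatible families in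
the product of the group rings `ℤ_ℓ[ℤ/ℓ^(n+1)ℤ]`, `n ≥ 0`. -/
def zlLimitRing (ℓ : ℕ) [Fact ℓ.Prime] :
    Subring ((n : ℕ) → MonoidAlgebra ℤ_[ℓ] (Multiplicative (ZMod (ℓ ^ (n + 1))))) where
  carrier := {x | ∀ n : ℕ, zlTransition ℓ n (x (n + 1)) = x n}
  zero_mem' n := by simp
  one_mem' n := by simp
  add_mem' {a b} ha hb n := by simp [Pi.add_apply, map_add, ha n, hb n]
  neg_mem' {a} ha n := by simp [Pi.neg_apply, map_neg, ha n]
  mul_mem' {a b} ha hb n := by simp [Pi.mul_apply, map_mul, ha n, hb n]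

open Polynomial

/-- The polynomial `(1 + X)^N - 1`. -/
def omegaPoly (R : Type*) [CommRing R] (N : ℕ) : R[X] := (X + 1) ^ N - 1

/-- The generator `γ` of the group ring `R[ℤ/N]`, the class of `1`. -/
def groupGen (R : Type*) [CommRing R] (N : ℕ) : MonoidAlgebra R (Multiplicative (ZMod N)) :=
  MonoidAlgebra.of R _ (Multiplicative.ofAdd 1)

/-! ### Group rings of cyclic groups as quotients of polynomial rings -/

section GroupRing

variable {R : Type*} [CommRing R] {N : ℕ}

lemma groupGen_pow (k : ℕ) : groupGen R N ^ k =
    MonoidAlgebra.of R (Multiplicative (ZMod N)) (Multiplicative.ofAdd (k : ZMod N)) := by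
  rw [groupGen, ← map_pow, ← ofAdd_nsmul, nsmul_one]

lemma groupGen_pow_self : groupGen R N ^ N = 1 := by
  rw [groupGen_pow, ZMod.natCast_self, ofAdd_zero, map_one]

/-- `γ` satisfies no nonzero polynomial of degree less than `N`, since `1, γ, …, γ^(N-1)` are
distinct elements of the group. -/
lemma eq_zero_of_aeval_groupGen [NeZero N] {s : R[X]} (hs : s.degree < N)
    (h : aeval (groupGen R N) s = 0) : s = 0 := by
  by_contra h0
  refine h0 ?_
  ext i
  by_cases hi : i < N
  · rw [aeval_eq_sum_range' ((natDegree_lt_iff_degree_lt h0).2 hs)] at h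
    have h2 := congrArg (fun z => z.coeff (Multiplicative.ofAdd (i : ZMod N))) h
    simp only [groupGen_pow, MonoidAlgebra.of_apply, MonoidAlgebra.coeff_sum,
      MonoidAlgebra.coeff_smul, MonoidAlgebra.coeff_single, Finsupp.finsetSum_apply,
      Finsupp.smul_apply, MonoidAlgebra.coeff_zero, Finsupp.zero_apply] at h2
    rw [Finset.sum_eq_single i] at h2
    · simpa using h2
    · intro j hj hji
      rw [Finsupp.single_eq_of_ne, smul_zero]
      intro e
      have e' := (ZMod.natCast_eq_natCast_iff' _ _ _).1 (Multiplicative.ofAdd.injective e)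
      rw [Nat.mod_eq_of_lt hi, Nat.mod_eq_of_lt (Finset.mem_range.1 hj)] at e'
      exact hji e'.symm
    · intro hn
      exact absurd (Finset.mem_range.2 hi) hn
  · rw [coeff_zero]
    exact coeff_eq_zero_of_degree_lt (hs.trans_le (by exact_mod_cast not_lt.1 hi))

lemma X_pow_sub_one_dvd_of_aeval_groupGen [Nontrivial R] [NeZero N] {f : R[X]}
    (h : aeval (groupGen R N) f = 0) : (X ^ N - 1 : R[X]) ∣ f := by
  have hm : (X ^ N - 1 : R[X]).Monic := by
    simpa using monic_X_pow_sub_C (1 : R) (NeZero.ne N)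
  rw [← modByMonic_eq_zero_iff_dvd hm]
  apply eq_zero_of_aeval_groupGen (N := N)
  · refine (degree_modByMonic_lt f hm).trans_eq ?_
    simpa using degree_X_pow_sub_C (Nat.pos_of_neZero N) (1 : R)
  · have := congrArg (aeval (groupGen R N)) (modByMonic_add_div f (X ^ N - 1))
    simpa [h, groupGen_pow_self] using this

lemma aeval_omegaPoly : aeval (groupGen R N - 1) (omegaPoly R N) = 0 := by
  simp [omegaPoly, groupGen_pow_self]

lemma omegaPoly_dvd_of_aeval [Nontrivial R] [NeZero N] {f : R[X]}
    (h : aeval (groupGen R N - 1) f = 0) : omegaPoly R N ∣ f := by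
  -- Substituting `X - 1` for `X` turns evaluation at `γ - 1` into evaluation at `γ`.
  have h1 : aeval (groupGen R N) (f.comp (X - 1)) = 0 := by
    rw [aeval_comp]; simpa using h
  obtain ⟨q, hq⟩ := X_pow_sub_one_dvd_of_aeval_groupGen h1
  refine ⟨q.comp (X + 1), ?_⟩
  have := congrArg (fun z => z.comp (X + 1)) hq
  simpa [comp_assoc, omegaPoly] using this

lemma aeval_groupGen_surjective [NeZero N] :
    Function.Surjective (aeval (groupGen R N - 1) : R[X] → _) := by
  intro x
  induction x using MonoidAlgebra.induction_on with
  | of m =>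
    refine ⟨(X + 1) ^ (Multiplicative.toAdd m).val, ?_⟩
    simp [groupGen_pow]
  | add x y hx hy =>
    obtain ⟨a, rfl⟩ := hx
    obtain ⟨b, rfl⟩ := hy
    exact ⟨a + b, map_add _ _ _⟩
  | smul r x hx =>
    obtain ⟨a, rfl⟩ := hx
    exact ⟨r • a, map_smul _ _ _⟩

end GroupRing

/-! ### Power series over the ℓ-adic integers -/

section Padic

variable (ℓ : ℕ) [hℓ : Fact ℓ.Prime]

lemma omegaPoly_isDistinguishedAt (n : ℕ) :
    (omegaPoly ℤ_[ℓ] (ℓ ^ n)).IsDistinguishedAt (IsLocalRing.maximalIdeal ℤ_[ℓ]) := by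
  have hN : ℓ ^ n ≠ 0 := pow_ne_zero _ hℓ.out.ne_zero
  have hX : ((X + 1 : ℤ_[ℓ][X]) ^ (ℓ ^ n)).Monic := by
    simpa using (monic_X_add_C (1 : ℤ_[ℓ])).pow (ℓ ^ n)
  have hd : ((X + 1 : ℤ_[ℓ][X]) ^ (ℓ ^ n)).natDegree = ℓ ^ n := by
    simpa using natDegree_pow_X_add_C (ℓ ^ n) (1 : ℤ_[ℓ])
  have hdω : (omegaPoly ℤ_[ℓ] (ℓ ^ n)).natDegree = ℓ ^ n := by
    rw [omegaPoly, natDegree_sub_eq_left_of_natDegree_lt, hd]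
    rw [hd, natDegree_one]; exact Nat.pos_of_ne_zero hN
  refine { mem := ?_, monic := ?_ }
  · intro k hk
    rw [hdω] at hk
    rw [omegaPoly, coeff_sub, coeff_X_add_one_pow, coeff_one]
    split_ifs with h0
    · subst h0; simp
    · rw [sub_zero, PadicInt.maximalIdeal_eq_span_p, Ideal.mem_span_singleton]
      exact_mod_cast Nat.cast_dvd_cast (hℓ.out.dvd_choose_pow h0 hk.ne)
  · refine hX.sub_of_left ?_
    rw [degree_one, degree_eq_natDegree hX.ne_zero, hd]
    exact_mod_cast Nat.pos_of_ne_zero hN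

/-- The ratio `((1 + X)^(N ℓ) - 1) / ((1 + X)^N - 1)` is a sum of `ℓ` powers of `1 + X`; its
constant coefficient `ℓ` is not a unit, so each step `N ↦ N ℓ` gains a factor in the maximal
ideal. -/
lemma omegaPoly_mem_pow (n : ℕ) : (omegaPoly ℤ_[ℓ] (ℓ ^ n) : PowerSeries ℤ_[ℓ]) ∈
    IsLocalRing.maximalIdeal (PowerSeries ℤ_[ℓ]) ^ n := by
  induction n with
  | zero => simp
  | succ n ih =>
    have key : omegaPoly ℤ_[ℓ] (ℓ ^ (n + 1)) = omegaPoly ℤ_[ℓ] (ℓ ^ n) *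
        ∑ i ∈ Finset.range ℓ, ((X + 1) ^ (ℓ ^ n)) ^ i := by
      rw [omegaPoly, omegaPoly, mul_geom_sum, ← pow_mul, pow_succ]
    rw [key, coe_mul, pow_succ]
    refine Ideal.mul_mem_mul ih ?_
    rw [IsLocalRing.mem_maximalIdeal, mem_nonunits_iff, PowerSeries.isUnit_iff_constantCoeff]
    have : PowerSeries.constantCoeff
        ((∑ i ∈ Finset.range ℓ, ((X + 1) ^ (ℓ ^ n)) ^ i : ℤ_[ℓ][X]) : PowerSeries ℤ_[ℓ])
          = (ℓ : ℤ_[ℓ]) := by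
      rw [Polynomial.constantCoeff_coe, coeff_zero_eq_eval_zero]
      simp [eval_finsetSum]
    rw [this]
    exact PadicInt.p_nonunit

lemma omegaPoly_dvd {m n : ℕ} (h : m ≤ n) :
    omegaPoly ℤ_[ℓ] (ℓ ^ m) ∣ omegaPoly ℤ_[ℓ] (ℓ ^ n) := by
  obtain ⟨k, rfl⟩ := Nat.exists_eq_add_of_le h
  rw [omegaPoly, omegaPoly, pow_add, pow_mul]
  exact sub_one_dvd_pow_sub_one _ _

/-- Evaluation at `γ - 1` extends from polynomials to power series, with kernel generated by
`(1 + X)^(ℓⁿ) - 1`. -/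
lemma exists_evalHom (n : ℕ) :
    ∃ φ : PowerSeries ℤ_[ℓ] →+* MonoidAlgebra ℤ_[ℓ] (Multiplicative (ZMod (ℓ ^ n))),
      (∀ p : ℤ_[ℓ][X], φ p = aeval (groupGen ℤ_[ℓ] (ℓ ^ n) - 1) p) ∧
      ∀ f, φ f = 0 ↔ (omegaPoly ℤ_[ℓ] (ℓ ^ n) : PowerSeries ℤ_[ℓ]) ∣ f := by
  have : NeZero (ℓ ^ n) := ⟨pow_ne_zero _ hℓ.out.ne_zero⟩
  set g := omegaPoly ℤ_[ℓ] (ℓ ^ n)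
  let E := (omegaPoly_isDistinguishedAt ℓ n).algEquivQuotient
  let ψ : (ℤ_[ℓ][X] ⧸ Ideal.span {g}) →+* _ :=
    Ideal.Quotient.lift (Ideal.span {g})
      (aeval (groupGen ℤ_[ℓ] (ℓ ^ n) - 1) :
        ℤ_[ℓ][X] →ₐ[ℤ_[ℓ]] MonoidAlgebra ℤ_[ℓ] (Multiplicative (ZMod (ℓ ^ n)))).toRingHom
      (by
        intro a ha
        obtain ⟨b, rfl⟩ := Ideal.mem_span_singleton.1 ha
        simp [g, aeval_omegaPoly])
  have hE (p : ℤ_[ℓ][X]) : E.symm (Ideal.Quotient.mk _ (p : PowerSeries ℤ_[ℓ])) =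
      Ideal.Quotient.mk _ p := by
    rw [AlgEquiv.symm_apply_eq]
    rfl
  refine ⟨(ψ.comp E.symm.toAlgHom.toRingHom).comp (Ideal.Quotient.mk _), ?_, ?_⟩
  · intro p
    change ψ (E.symm (Ideal.Quotient.mk _ (p : PowerSeries ℤ_[ℓ]))) = _
    rw [hE]
    rfl
  · intro f
    change ψ (E.symm (Ideal.Quotient.mk _ f)) = 0 ↔ _
    rw [← Ideal.mem_span_singleton, ← Ideal.Quotient.eq_zero_iff_mem]
    constructor
    · intro h
      obtain ⟨p, hp⟩ := Ideal.Quotient.mk_surjective (E.symm (Ideal.Quotient.mk _ f))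
      rw [← hp] at h
      have hz := Ideal.Quotient.eq_zero_iff_mem.2
        (Ideal.mem_span_singleton.2 (omegaPoly_dvd_of_aeval (f := p) h))
      exact (map_eq_zero_iff E.symm E.symm.injective).1 (hp.symm.trans hz)
    · intro h
      rw [h, map_zero, map_zero]

/-- A common zero modulo all the `(1 + X)^(ℓⁿ) - 1` vanishes, by Krull's intersection theorem. -/
lemma eq_zero_of_forall_omegaPoly_dvd {f : PowerSeries ℤ_[ℓ]}
    (h : ∀ n, (omegaPoly ℤ_[ℓ] (ℓ ^ (n + 1)) : PowerSeries ℤ_[ℓ]) ∣ f) : f = 0 := by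
  have hK := Ideal.iInf_pow_eq_bot_of_isLocalRing
    (IsLocalRing.maximalIdeal (PowerSeries ℤ_[ℓ])) (Ideal.IsPrime.ne_top inferInstance)
  rw [← Ideal.mem_bot, ← hK, Ideal.mem_iInf]
  intro n
  exact Ideal.pow_le_pow_right n.le_succ
    (Ideal.mem_of_dvd _ (h n) (omegaPoly_mem_pow ℓ (n + 1)))

lemma zlTransition_groupGen (n : ℕ) :
    zlTransition ℓ n (groupGen ℤ_[ℓ] (ℓ ^ (n + 2))) = groupGen ℤ_[ℓ] (ℓ ^ (n + 1)) := by
  have h1 : (ZMod.cast (1 : ZMod (ℓ ^ (n + 2))) : ZMod (ℓ ^ (n + 1))) = 1 :=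
    ZMod.cast_one (pow_dvd_pow ℓ (Nat.le_succ (n + 1)))
  simp [zlTransition, groupGen, h1]

lemma zlTransition_aeval (n : ℕ) (p : ℤ_[ℓ][X]) :
    zlTransition ℓ n (aeval (groupGen ℤ_[ℓ] (ℓ ^ (n + 2)) - 1) p) =
      aeval (groupGen ℤ_[ℓ] (ℓ ^ (n + 1)) - 1) p := by
  have hc : (zlTransition ℓ n).comp (algebraMap ℤ_[ℓ] _) = algebraMap ℤ_[ℓ] _ :=
    MonoidAlgebra.mapDomainRingHom_comp_algebraMap _
  rw [aeval_def, hom_eval₂, hc, map_sub, map_one, zlTransition_groupGen, aeval_def]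

open PowerSeries.WithPiTopology in
/-- Power series over `ℤ_ℓ` form a compact space, so a decreasing sequence of cosets of principal
ideals has nonempty intersection. -/
lemma exists_forall_dvd_sub (g f : ℕ → PowerSeries ℤ_[ℓ]) (hg : ∀ n, g n ∣ g (n + 1))
    (hf : ∀ n, g n ∣ f (n + 1) - f n) : ∃ F, ∀ n, g n ∣ F - f n := by
  have : CompactSpace (PowerSeries ℤ_[ℓ]) :=
    inferInstanceAs (CompactSpace ((Unit →₀ ℕ) → ℤ_[ℓ]))
  let S : ℕ → Set (PowerSeries ℤ_[ℓ]) := fun n => Set.range fun q => f n + g n * q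
  have hS (n) : IsCompact (S n) :=
    isCompact_range (continuous_const.add (continuous_const.mul continuous_id))
  obtain ⟨F, hF⟩ := IsCompact.nonempty_iInter_of_sequence_nonempty_isCompact_isClosed S
    (by
      rintro n _ ⟨q, rfl⟩
      obtain ⟨a, ha⟩ := hg n
      obtain ⟨b, hb⟩ := hf n
      refine ⟨b + a * q, ?_⟩
      dsimp only
      rw [ha, eq_add_of_sub_eq hb]
      ring)
    (fun n => Set.range_nonempty _) (hS 0) (fun n => (hS n).isClosed)
  refine ⟨F, fun n => ?_⟩
  obtain ⟨q, rfl⟩ := Set.mem_iInter.1 hF n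
  exact ⟨q, by simp⟩

end Padic

/-- For a prime `ℓ`, there is a ring isomorphism
`ℤ_ℓ[[T]] ≅ lim_n ℤ_ℓ[ℤ/ℓⁿℤ]` sending `T` to the compatible system `(γ_n - 1)_n`, where
`γ_n` is the group element corresponding to the residue class of `1` in `ℤ/ℓⁿℤ`. -/
theorem power_series_iso_limit_group_rings (ℓ : ℕ) [Fact ℓ.Prime] :
    ∃ e : PowerSeries ℤ_[ℓ] ≃+* zlLimitRing ℓ,
      ∀ n : ℕ,
        ((e (PowerSeries.X) : zlLimitRing ℓ) :
            (n : ℕ) → MonoidAlgebra ℤ_[ℓ] (Multiplicative (ZMod (ℓ ^ (n + 1))))) n =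
          MonoidAlgebra.of ℤ_[ℓ] (Multiplicative (ZMod (ℓ ^ (n + 1))))
            (Multiplicative.ofAdd (1 : ZMod (ℓ ^ (n + 1)))) - 1 := by
  have hN (n : ℕ) : NeZero (ℓ ^ (n + 1)) := ⟨pow_ne_zero _ (Fact.out : ℓ.Prime).ne_zero⟩
  choose φ hφp hφ0 using fun n => exists_evalHom ℓ (n + 1)
  have hdvd (n : ℕ) : (omegaPoly ℤ_[ℓ] (ℓ ^ (n + 1)) : PowerSeries ℤ_[ℓ]) ∣
      (omegaPoly ℤ_[ℓ] (ℓ ^ (n + 1 + 1)) : PowerSeries ℤ_[ℓ]) := by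
    obtain ⟨c, hc⟩ := omegaPoly_dvd ℓ (n + 1).le_succ
    exact ⟨c, by rw [← coe_mul, ← hc]⟩
  have hsurj (n : ℕ) (x) : ∃ f, φ n f = x := by
    obtain ⟨p, hp⟩ := aeval_groupGen_surjective (R := ℤ_[ℓ]) x
    exact ⟨p, (hφp n p).trans hp⟩
  have hcompat (f : PowerSeries ℤ_[ℓ]) (n : ℕ) : zlTransition ℓ n (φ (n + 1) f) = φ n f := by
    -- Modulo the kernel of `φ (n + 1)`, which lies in that of `φ n`, `f` is a polynomial.
    obtain ⟨p, hp⟩ := aeval_groupGen_surjective (R := ℤ_[ℓ]) (φ (n + 1) f)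
    have h1 : φ (n + 1) (f - p) = 0 := by rw [map_sub, hφp, hp, sub_self]
    have h2 : φ n (f - p) = 0 := (hφ0 n _).2 ((hdvd n).trans ((hφ0 (n + 1) _).1 h1))
    rw [map_sub, sub_eq_zero, hφp] at h2
    rw [h2, ← hp]
    exact zlTransition_aeval ℓ n p
  let Φ : PowerSeries ℤ_[ℓ] →+* zlLimitRing ℓ :=
    (RingHom.pi φ).codRestrict (zlLimitRing ℓ) (fun f => hcompat f)
  have hΦ (f) (n : ℕ) : (Φ f).1 n = φ n f := rfl
  have hinj : Function.Injective Φ := by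
    rw [injective_iff_map_eq_zero]
    intro f hf
    refine eq_zero_of_forall_omegaPoly_dvd ℓ fun n => (hφ0 n f).1 ?_
    rw [← hΦ, hf]
    rfl
  have hsur : Function.Surjective Φ := by
    intro x
    choose f hf using fun n => hsurj n (x.1 n)
    obtain ⟨F, hF⟩ := exists_forall_dvd_sub ℓ _ f hdvd (fun n => by
      rw [← hφ0, map_sub, ← hcompat, hf, hf, x.2 n, sub_self])
    refine ⟨F, Subtype.ext (funext fun n => ?_)⟩
    rw [hΦ, ← hf n, ← sub_eq_zero, ← map_sub, hφ0]
    exact hF n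
  refine ⟨RingEquiv.ofBijective Φ ⟨hinj, hsur⟩, fun n => ?_⟩
  change φ n PowerSeries.X = groupGen ℤ_[ℓ] (ℓ ^ (n + 1)) - 1
  rw [← Polynomial.coe_X, hφp, aeval_X]
end
end

section
/- Let R be a commutative ring, A an r × r matrix over R, and d ≥ 1 an integer. Let Φ be the dr × dr block matrix (with d × d blocks of size r × r, block indices 0, …, d−1) with block Φ(0, d−1) = A, blocks Φ(i, i−1) = I_r for 1 ≤ i ≤ d−1, and all other blocks 0. Then in the polynomial ring R[T] one has the identity det(I_{dr} − T·Φ) = det(I_r − T^d·A). -/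
/-!
Split off the corner block: `1 - T·Φ = N - E W`, where `N = 1 - T·S` with `S` the block
subdiagonal shift, `E` is the inclusion of the block column `0`, and `W = T·A` read in the last
block column. The block column `V = (T^i · 1)_i` solves `N V = E` (a geometric series), so
`1 - T·Φ = N (1 - V W)`. Since `N` is block unitriangular its determinant is `1`, and
Sylvester's identity `det (1 - V W) = det (1 - W V)` concludes because `W V = T^d·A`.
-/

/-- The block subdiagonal shift: identity blocks in positions `(i + 1, i)`. -/
def blockShift (P : Type) [CommRing P] (d r : ℕ) : Matrix (Fin d × Fin r) (Fin d × Fin r) P :=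
  fun p q => if (p.1 : ℕ) = (q.1 : ℕ) + 1 ∧ p.2 = q.2 then 1 else 0

/-- The block column whose `i`-th block is `x ^ i • 1`. -/
def powColumn {P : Type} [CommRing P] (d r : ℕ) (x : P) : Matrix (Fin d × Fin r) (Fin r) P :=
  fun p b => if p.2 = b then x ^ (p.1 : ℕ) else 0

/-- The block row with `B` in the last block and zeros elsewhere. -/
def lastRow {P : Type} [CommRing P] (d : ℕ) {r : ℕ} (B : Matrix (Fin r) (Fin r) P) :
    Matrix (Fin r) (Fin d × Fin r) P :=
  fun b q => if (q.1 : ℕ) = d - 1 then B b q.2 else 0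

theorem det_one_sub_smul_blockShift {P : Type} [CommRing P] (d r : ℕ) (x : P) :
    (1 - x • blockShift P d r).det = 1 := by
  have hM : (1 - x • blockShift P d r).BlockTriangular
      (fun p : Fin d × Fin r => OrderDual.toDual p.1) := by
    intro p q h
    have h' : p.1 < q.1 := h
    have h1 : p ≠ q := fun e => by simp [e] at h'
    have h2 : ¬ ((p.1 : ℕ) = (q.1 : ℕ) + 1 ∧ p.2 = q.2) := by
      have : (p.1 : ℕ) < q.1 := h'
      omega
    simp [Matrix.one_apply_ne h1, blockShift, h2]
  rw [hM.det_fintype]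
  refine Finset.prod_eq_one fun k _ => ?_
  have : (1 - x • blockShift P d r).toSquareBlock
      (fun p : Fin d × Fin r => OrderDual.toDual p.1) k = 1 := by
    ext ⟨p, hp⟩ ⟨q, hq⟩
    have h : p.1 = q.1 := OrderDual.toDual.injective (hp.trans hq.symm)
    simp [Matrix.toSquareBlock_def, blockShift, h, Matrix.one_apply]
  rw [this, Matrix.det_one]

/-- Multiplication by the shift moves each block of a power column down by one. -/
theorem blockShift_mul_powColumn {P : Type} [CommRing P] (d r : ℕ) (x : P)
    (p : Fin d × Fin r) (b : Fin r) :
    (blockShift P d r * powColumn d r x) p b =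
      if (p.1 : ℕ) = 0 then 0 else if p.2 = b then x ^ ((p.1 : ℕ) - 1) else 0 := by
  obtain ⟨⟨i, hi⟩, a⟩ := p
  rw [Matrix.mul_apply]
  rcases i with _ | k
  · simp [blockShift]
  · rw [Finset.sum_eq_single (⟨⟨k, by omega⟩, a⟩ : Fin d × Fin r)]
    · simp [blockShift, powColumn]
    · rintro ⟨⟨j, hj⟩, c⟩ - hne
      have : ¬ (k = j ∧ a = c) := by
        rintro ⟨rfl, rfl⟩
        exact hne rfl
      simp [blockShift, this]
    · simp

/-- The geometric series: `powColumn` is the first block column of `(1 - x • S)⁻¹`. -/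
theorem one_sub_smul_blockShift_mul_powColumn {P : Type} [CommRing P] (d r : ℕ) (x : P)
    (p : Fin d × Fin r) (b : Fin r) :
    ((1 - x • blockShift P d r : Matrix (Fin d × Fin r) (Fin d × Fin r) P) *
      powColumn d r x) p b =
      if (p.1 : ℕ) = 0 ∧ p.2 = b then 1 else 0 := by
  rw [Matrix.sub_mul, Matrix.one_mul, Matrix.smul_mul, Matrix.sub_apply, Matrix.smul_apply,
    blockShift_mul_powColumn, powColumn]
  obtain ⟨⟨i, hi⟩, a⟩ := p
  rcases i with _ | k
  · simp
  · by_cases h : a = b <;> simp [h, pow_succ']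

theorem lastRow_mul_powColumn {P : Type} [CommRing P] (d r : ℕ) (hd : 1 ≤ d) (x : P)
    (B : Matrix (Fin r) (Fin r) P) :
    lastRow d B * powColumn d r x = x ^ (d - 1) • B := by
  ext a b
  rw [Matrix.mul_apply, Finset.sum_eq_single (⟨⟨d - 1, by omega⟩, b⟩ : Fin d × Fin r)]
  · simp [lastRow, powColumn, mul_comm]
  · rintro ⟨⟨j, hj⟩, c⟩ - hne
    by_cases h1 : j = d - 1
    · have h2 : c ≠ b := by
        rintro rfl
        subst h1
        exact hne rfl
      simp [powColumn, h2]
    · simp [lastRow, h1]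
  · simp


/-- Let `R` be a commutative ring, `A` an `r × r` matrix over `R` and
`d ≥ 1`. Let `Φ` be the `dr × dr` block matrix (indexed by `Fin d × Fin r`) with block `A`
in block position `(0, d-1)`, identity blocks in positions `(i, i-1)` for `1 ≤ i ≤ d-1`,
and zero blocks elsewhere. Then `det(1 - T·Φ) = det(1 - T^d·A)` in `R[T]`. -/
theorem det_one_sub_smul_companion_blocks (R : Type) [CommRing R] (r d : ℕ) (hd : 1 ≤ d)
    (A : Matrix (Fin r) (Fin r) R)
    (Φ : Matrix (Fin d × Fin r) (Fin d × Fin r) R)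
    (hΦ : ∀ p q : Fin d × Fin r, Φ p q =
      if (p.1 : ℕ) = 0 ∧ (q.1 : ℕ) = d - 1 then A p.2 q.2
      else if (p.1 : ℕ) = (q.1 : ℕ) + 1 then (if p.2 = q.2 then 1 else 0)
      else 0) :
    Matrix.det
        ((1 : Matrix (Fin d × Fin r) (Fin d × Fin r) (Polynomial R)) -
          (Polynomial.X : Polynomial R) • Φ.map (Polynomial.C ·)) =
      Matrix.det
        ((1 : Matrix (Fin r) (Fin r) (Polynomial R)) -
          ((Polynomial.X : Polynomial R) ^ d) • A.map (Polynomial.C ·)) := by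
  have key : (1 : Matrix (Fin d × Fin r) (Fin d × Fin r) (Polynomial R)) -
      (Polynomial.X : Polynomial R) • Φ.map (Polynomial.C ·) =
      (1 - (Polynomial.X : Polynomial R) • blockShift (Polynomial R) d r) *
        (1 - powColumn d r (Polynomial.X : Polynomial R) *
          lastRow d ((Polynomial.X : Polynomial R) • A.map (Polynomial.C ·))) := by
    rw [Matrix.mul_sub, Matrix.mul_one, ← Matrix.mul_assoc, sub_sub]
    congr 1
    ext1 p q
    rw [Matrix.add_apply, Matrix.mul_apply]
    simp only [one_sub_smul_blockShift_mul_powColumn, Matrix.smul_apply, Matrix.map_apply, hΦ,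
      blockShift, lastRow, smul_eq_mul]
    by_cases h0 : (p.1 : ℕ) = 0
    · by_cases hq : (q.1 : ℕ) = d - 1 <;> simp [h0, hq]
    · by_cases h1 : (p.1 : ℕ) = q.1 + 1
      · by_cases h2 : p.2 = q.2 <;> simp [h1, h2]
      · simp [h0, h1]
  rw [key, Matrix.det_mul, det_one_sub_smul_blockShift, one_mul, Matrix.det_one_sub_mul_comm,
    lastRow_mul_powColumn d r hd, smul_smul, ← pow_succ, Nat.sub_add_cancel hd]
end
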